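/- Let V be a commutative quantale (in which arbitrary joins distribute over finite meets, i.e. V is a frame) and (X,a) a V-group. Define â : X × X → V by â(x,x′) = a(x,x′) ⊓ a(x′,x). Then (X,â) is a V-group (â is reflexive, transitive, and invariant by shifting) and it is symmetric: â(x,x′) = â(x′,x) for all x,x′ ∈ X. -/

import Mathlib

/-!
The transpose of a `V`-group structure is again one, by commutativity of `⊗`, and so is the
pointwise meet of two of them, by monotonicity of `⊗`. The structure `â` is the meet of `a` with its
transpose.
-/

section

variable {V X : Type*}

/-- The structure `a : X × X → V` makes `X` a category enriched in `V`; the tensor product of `V` is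
written `*` and its unit `1`. -/
structure IsVCategory [LE V] [Mul V] [One V] (a : X → X → V) : Prop where
  refl : ∀ x, 1 ≤ a x x
  trans : ∀ x x' x'', a x x' * a x' x'' ≤ a x x''

/-- `(X, a)` satisfies the axioms of a `V`-group, for an arbitrary addition on `X`. -/
structure IsVGroup [LE V] [Mul V] [One V] [Add X] (a : X → X → V) : Prop extends
    IsVCategory a where
  shift : ∀ x x' x'', a x' x'' = a (x' + x) (x'' + x)

/-- The symmetrization `â` of `a`, i.e. `â x x' = a x x' ⊓ a x' x`. -/
def symmetrization [Min V] (a : X → X → V) : X → X → V :=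
  a ⊓ flip a

theorem symmetrization_comm [SemilatticeInf V] (a : X → X → V) (x x' : X) :
    symmetrization a x x' = symmetrization a x' x :=
  inf_comm _ _

namespace IsVCategory

theorem flip [LE V] [CommMagma V] [One V] {a : X → X → V} (ha : IsVCategory a) :
    IsVCategory (flip a) where
  refl := ha.refl
  trans x x' x'' := (mul_comm (a x' x) (a x'' x')).trans_le (ha.trans x'' x' x)

theorem inf [SemilatticeInf V] [Mul V] [One V] [MulLeftMono V] [MulRightMono V]
    {a b : X → X → V} (ha : IsVCategory a) (hb : IsVCategory b) : IsVCategory (a ⊓ b) where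
  refl x := le_inf (ha.refl x) (hb.refl x)
  trans x x' x'' := le_inf
    ((mul_le_mul' inf_le_left inf_le_left).trans (ha.trans x x' x''))
    ((mul_le_mul' inf_le_right inf_le_right).trans (hb.trans x x' x''))

end IsVCategory

namespace IsVGroup

variable [Add X]

theorem flip [LE V] [CommMagma V] [One V] {a : X → X → V} (ha : IsVGroup a) :
    IsVGroup (flip a) where
  toIsVCategory := ha.toIsVCategory.flip
  shift x x' x'' := ha.shift x x'' x'

theorem inf [SemilatticeInf V] [Mul V] [One V] [MulLeftMono V] [MulRightMono V]
    {a b : X → X → V} (ha : IsVGroup a) (hb : IsVGroup b) : IsVGroup (a ⊓ b) where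
  toIsVCategory := ha.toIsVCategory.inf hb.toIsVCategory
  shift x x' x'' := congrArg₂ (· ⊓ ·) (ha.shift x x' x'') (hb.shift x x' x'')

end IsVGroup

theorem isQuantale_of_mul_sSup_distrib [CommSemigroup V] [CompleteLattice V]
    (hq : ∀ (v : V) (s : Set V), v * sSup s = ⨆ u ∈ s, v * u) : IsQuantale V where
  mul_sSup_distrib := hq
  sSup_mul_distrib s v := by simpa only [mul_comm] using hq v s

theorem stmt_12_general [SemilatticeInf V] [CommSemigroup V] [One V] [MulLeftMono V] [Add X]
    {a : X → X → V} (ha : IsVGroup a) :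
    IsVGroup (symmetrization a) ∧ ∀ x x', symmetrization a x x' = symmetrization a x' x :=
  ⟨ha.inf ha.flip, symmetrization_comm a⟩

end

theorem stmt_12 {V : Type*} [CompleteLattice V] [CommMonoid V]
    (hq : ∀ (v : V) (s : Set V), v * sSup s = ⨆ u ∈ s, v * u)
    (hframe : ∀ (v : V) (s : Set V), v ⊓ sSup s = ⨆ u ∈ s, v ⊓ u)
    {X : Type*} [AddGroup X] (a : X → X → V)
    (ha_refl : ∀ x : X, 1 ≤ a x x)
    (ha_trans : ∀ x x' x'' : X, a x x' * a x' x'' ≤ a x x'')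
    (ha_shift : ∀ x x' x'' : X, a x' x'' = a (x' + x) (x'' + x)) :
    (∀ x : X, 1 ≤ a x x ⊓ a x x) ∧
    (∀ x x' x'' : X, (a x x' ⊓ a x' x) * (a x' x'' ⊓ a x'' x') ≤ a x x'' ⊓ a x'' x) ∧
    (∀ x x' x'' : X, a x' x'' ⊓ a x'' x' = a (x' + x) (x'' + x) ⊓ a (x'' + x) (x' + x)) ∧
    (∀ x x' : X, a x x' ⊓ a x' x = a x' x ⊓ a x x') := by
  have := isQuantale_of_mul_sSup_distrib hq
  have ⟨hgroup, hsymm⟩ := stmt_12_general ⟨⟨ha_refl, ha_trans⟩, ha_shift⟩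
  exact ⟨hgroup.refl, hgroup.trans, hgroup.shift, hsymm⟩
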